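/- (Bourgain's L⁴ estimate on 𝕋².) There exists a constant C > 0 such that for every finitely supported function a : ℤ×ℤ → ℂ, the trigonometric polynomial u(t,x) = Σ_{(q,k)} a(q,k) e^{i(qt+kx)} satisfies ( ∫_𝕋 ∫_𝕋 |u(t,x)|⁴ dx dt )^{1/4} ≤ C ( Σ_{(q,k)} (1+(q+k²)²)^{3/8} |a(q,k)|² )^{1/2}. -/

import Mathlib

/-!
Since `‖u‖₄² = ‖u²‖₂`, Plancherel (`plancherel`, `sq_eq_conv`) turns the claim into an `ℓ²` bound for
the self-convolution of `a`. Split `a` into pieces `a_m` on which the modulation `σ = q + k²` has size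
about `2^m`. For a fixed output frequency, the number of pairs of frequencies at levels `m` and `n`
which add up to it is `O(2^{min(m,n)} * 2^{max(m,n)/2})` (`card_fiber`): the smaller modulation and the
space frequency `k` of one of the factors determine the pair, and `k` solves a quadratic constraint with
error `O(2^{max(m,n)})`. Cauchy–Schwarz (`bilinear`) then gives
`‖a_m * a_n‖ ≲ 2^{min/2 + max/4} ‖a_m‖ ‖a_n‖ = 2^{-|m-n|/8} (2^{3m/8} ‖a_m‖) (2^{3n/8} ‖a_n‖)`,
and the off-diagonal decay makes the double sum over levels converge by Schur's test (`schur`), with no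
logarithmic loss: the result is `Σ_m 2^{3m/4} ‖a_m‖²` (`l2_conv`), comparable to the square of the
`X^{3/8,0}` norm (`weight`).
-/

noncomputable section

open Real Complex

/-- The trigonometric polynomial on `𝕋²` with coefficients `a : ℤ × ℤ → ℂ`,
`u(t,x) = Σ_{(q,k)} a(q,k) e^{i(qt+kx)}`. -/
def trigPoly2 (a : ℤ × ℤ → ℂ) (t x : ℝ) : ℂ :=
  ∑' p : ℤ × ℤ, a p * Complex.exp (Complex.I * ((p.1 : ℂ) * (t : ℂ) + (p.2 : ℂ) * (x : ℂ)))

namespace BourgainL4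

/-! ### Characters and Plancherel's identity -/

/-- The character `e^{i(qt+kx)}` of `𝕋²` attached to the frequency `p = (q,k)`. -/
def chr (p : ℤ × ℤ) (t x : ℝ) : ℂ :=
  Complex.exp (Complex.I * ((p.1 : ℂ) * (t : ℂ) + (p.2 : ℂ) * (x : ℂ)))

lemma integral_exp_int (n : ℤ) :
    ∫ t in (0:ℝ)..(2 * π), Complex.exp (Complex.I * ((n : ℂ) * (t : ℂ)))
      = if n = 0 then (2 * π : ℂ) else 0 := by
  split_ifs with h
  · subst h
    simp
  · have hc : (Complex.I * n : ℂ) ≠ 0 := by simp [h]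
    have := integral_exp_mul_complex (a := 0) (b := 2 * π) hc
    simp only [← mul_assoc]
    rw [this]
    have h2 : Complex.exp (Complex.I * n * ((2 * π : ℝ) : ℂ)) = 1 := by
      rw [Complex.exp_eq_one_iff]
      exact ⟨n, by push_cast; ring⟩
    rw [h2]
    simp

lemma chr_mul_conj (p r : ℤ × ℤ) (t x : ℝ) :
    chr p t x * (starRingEnd ℂ) (chr r t x) =
      Complex.exp (Complex.I * (((p.1 - r.1 : ℤ) : ℂ) * (t : ℂ))) *
      Complex.exp (Complex.I * (((p.2 - r.2 : ℤ) : ℂ) * (x : ℂ))) := by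
  unfold chr
  rw [← Complex.exp_conj, ← Complex.exp_add, ← Complex.exp_add]
  congr 1
  simp
  ring

lemma integral_chr (p r : ℤ × ℤ) :
    ∫ t in (0:ℝ)..(2 * π), ∫ x in (0:ℝ)..(2 * π), chr p t x * (starRingEnd ℂ) (chr r t x)
      = if p = r then ((2 * π) ^ 2 : ℂ) else 0 := by
  simp_rw [chr_mul_conj, intervalIntegral.integral_const_mul,
    intervalIntegral.integral_mul_const, integral_exp_int, sub_eq_zero, Prod.ext_iff]
  split_ifs <;> simp_all [sq]

lemma chr_add (p r : ℤ × ℤ) (t x : ℝ) : chr (p + r) t x = chr p t x * chr r t x := by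
  unfold chr
  rw [← Complex.exp_add]
  congr 1
  simp
  ring

lemma continuous_integral {F : ℝ × ℝ → ℂ} (hF : Continuous F) :
    Continuous fun t : ℝ => ∫ x in (0:ℝ)..(2 * π), F (t, x) :=
  intervalIntegral.continuous_parametric_intervalIntegral_of_continuous'
    (f := fun t x => F (t, x)) hF 0 (2 * π)

/-- Plancherel's identity for trigonometric polynomials with frequencies in the finite set `T`. -/
lemma plancherel (T : Finset (ℤ × ℤ)) (b : ℤ × ℤ → ℂ) :
    ∫ t in (0:ℝ)..(2 * π), ∫ x in (0:ℝ)..(2 * π), ‖∑ r ∈ T, b r * chr r t x‖ ^ 2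
      = (2 * π) ^ 2 * ∑ r ∈ T, ‖b r‖ ^ 2 := by
  have key : ∀ t x : ℝ, ((‖∑ r ∈ T, b r * chr r t x‖ ^ 2 : ℝ) : ℂ) =
      ∑ p ∈ T, ∑ r ∈ T, (b p * (starRingEnd ℂ) (b r)) *
        (chr p t x * (starRingEnd ℂ) (chr r t x)) := by
    intro t x
    push_cast
    rw [← Complex.mul_conj', map_sum, Finset.sum_mul_sum]
    refine Finset.sum_congr rfl fun p _ => Finset.sum_congr rfl fun r _ => ?_
    rw [map_mul]; ring
  have hc : ∀ p : ℤ × ℤ, Continuous fun z : ℝ × ℝ => chr p z.1 z.2 := by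
    intro p; unfold chr; fun_prop
  have hcc : ∀ p r : ℤ × ℤ, Continuous fun z : ℝ × ℝ =>
      (b p * (starRingEnd ℂ) (b r)) * (chr p z.1 z.2 * (starRingEnd ℂ) (chr r z.1 z.2)) := by
    intro p r
    exact continuous_const.mul ((hc p).mul (Complex.continuous_conj.comp (hc r)))
  have hx : ∀ (p r : ℤ × ℤ) (t : ℝ), Continuous fun x : ℝ =>
      (b p * (starRingEnd ℂ) (b r)) * (chr p t x * (starRingEnd ℂ) (chr r t x)) := by
    intro p r t
    have h : ∀ p : ℤ × ℤ, Continuous fun x : ℝ => chr p t x := by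
      intro p; unfold chr; fun_prop
    exact continuous_const.mul ((h p).mul (Complex.continuous_conj.comp (h r)))
  have ht : ∀ (p r : ℤ × ℤ), Continuous fun t : ℝ => ∫ x in (0:ℝ)..(2 * π),
      (b p * (starRingEnd ℂ) (b r)) * (chr p t x * (starRingEnd ℂ) (chr r t x)) := fun p r =>
    continuous_integral (hcc p r)
  have hE : ((∫ t in (0:ℝ)..(2 * π), ∫ x in (0:ℝ)..(2 * π),
      ‖∑ r ∈ T, b r * chr r t x‖ ^ 2 : ℝ) : ℂ)
      = (((2 * π) ^ 2 * ∑ r ∈ T, ‖b r‖ ^ 2 : ℝ) : ℂ) := by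
    rw [← intervalIntegral.integral_ofReal]
    simp_rw [← intervalIntegral.integral_ofReal, key]
    have h1 : ∀ t : ℝ, (∫ x in (0:ℝ)..(2 * π), ∑ p ∈ T, ∑ r ∈ T,
        (b p * (starRingEnd ℂ) (b r)) * (chr p t x * (starRingEnd ℂ) (chr r t x))) =
        ∑ p ∈ T, ∑ r ∈ T, ∫ x in (0:ℝ)..(2 * π),
        (b p * (starRingEnd ℂ) (b r)) * (chr p t x * (starRingEnd ℂ) (chr r t x)) := by
      intro t
      rw [intervalIntegral.integral_finsetSum fun p _ =>
        (continuous_finsetSum _ fun r _ => hx p r t).intervalIntegrable _ _]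
      refine Finset.sum_congr rfl fun p _ => ?_
      rw [intervalIntegral.integral_finsetSum fun r _ => (hx p r t).intervalIntegrable _ _]
    simp_rw [h1]
    rw [intervalIntegral.integral_finsetSum fun p _ =>
        (continuous_finsetSum _ fun r _ => ht p r).intervalIntegrable _ _]
    push_cast
    rw [Finset.mul_sum]
    refine Finset.sum_congr rfl fun p hp => ?_
    rw [intervalIntegral.integral_finsetSum fun r _ => (ht p r).intervalIntegrable _ _]
    simp_rw [intervalIntegral.integral_const_mul, integral_chr]
    rw [Finset.sum_eq_single p]
    · rw [if_pos rfl, Complex.mul_conj']; ring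
    · intro r _ hr
      rw [if_neg hr.symm, mul_zero]
    · exact fun h => absurd hp h
  exact_mod_cast hE

/-! ### Convolution of coefficients -/

/-- The convolution `r ↦ Σ_p f p * g (r - p)`, with `p` restricted to the finite set `s`. It is the
full convolution as soon as `f` vanishes off `s`. -/
def conv (s : Finset (ℤ × ℤ)) (f g : ℤ × ℤ → ℂ) (r : ℤ × ℤ) : ℂ :=
  ∑ p ∈ s, f p * g (r - p)

/-- Translation of a sum over `s` by `p ∈ s` into a sum over the sumset `s + s`. The hypothesis on `H`
says that `H` vanishes wherever the translate of `G` does, hence off `p + s`. -/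
lemma sum_shift {M : Type*} [AddCommMonoid M] (s : Finset (ℤ × ℤ)) (G : ℤ × ℤ → M)
    (hG : ∀ p, p ∉ s → G p = 0) {p : ℤ × ℤ} (hp : p ∈ s) (H : ℤ × ℤ → M)
    (hH : ∀ r, G (r - p) = 0 → H r = 0) :
    ∑ r ∈ Finset.image₂ (· + ·) s s, H r = ∑ p' ∈ s, H (p + p') := by
  have h1 : ∑ p' ∈ s, H (p + p') = ∑ r ∈ s.image (p + ·), H r := by
    rw [Finset.sum_image fun x _ y _ h => add_left_cancel h]
  rw [h1]
  symm
  apply Finset.sum_subset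
  · intro r hr
    obtain ⟨p', hp', rfl⟩ := Finset.mem_image.1 hr
    exact Finset.mem_image₂_of_mem hp hp'
  · intro r _ hr
    refine hH r (hG _ fun h => hr ?_)
    exact Finset.mem_image.2 ⟨r - p, h, by simp⟩

/-- The coefficients of `u²` are the self-convolution of those of `u`. -/
lemma sq_eq_conv (s : Finset (ℤ × ℤ)) (a : ℤ × ℤ → ℂ) (ha : ∀ p, p ∉ s → a p = 0) (t x : ℝ) :
    (∑ p ∈ s, a p * chr p t x) ^ 2 =
      ∑ r ∈ Finset.image₂ (· + ·) s s, conv s a a r * chr r t x := by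
  simp_rw [conv, Finset.sum_mul]
  rw [Finset.sum_comm, sq, Finset.sum_mul]
  refine Finset.sum_congr rfl fun p hp => ?_
  rw [sum_shift s a ha hp _ fun r hr => by rw [hr]; simp, Finset.mul_sum]
  refine Finset.sum_congr rfl fun p' _ => ?_
  rw [chr_add, add_sub_cancel_left]; ring

/-! ### Counting lattice points near the parabola -/

/-- The dyadic level of the modulation `σ = q + k²` of a frequency `p = (q,k)`: the integer `m` with
`2^m ≤ |σ| + 1 < 2^(m+1)`. -/
def lev (p : ℤ × ℤ) : ℕ := Nat.log 2 ((p.1 + p.2 ^ 2).natAbs + 1)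

/-- On the half line where `2x - k ≥ 0` the squares `(2x-k)²` are increasing, and two of them at
distance at most `2L²` come from points `x` at distance at most `L`. -/
lemma card_half (S : Finset ℤ) (k E : ℤ) (L : ℕ)
    (h0 : ∀ x ∈ S, 0 ≤ 2 * x - k) (h : ∀ x ∈ S, |(2 * x - k) ^ 2 - E| ≤ (L : ℤ) ^ 2) :
    S.card ≤ L + 1 := by
  rcases S.eq_empty_or_nonempty with rfl | hne
  · simp
  have hm := S.min'_mem hne
  have hsub : S ⊆ Finset.Icc (S.min' hne) (S.min' hne + L) := by
    intro x hx
    have hle := S.min'_le x hx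
    refine Finset.mem_Icc.2 ⟨hle, ?_⟩
    have h1 := abs_le.1 (h x hx)
    have h2 := abs_le.1 (h _ hm)
    have h3 := h0 _ hm
    by_contra! hlt
    nlinarith [mul_nonneg h3 (sub_nonneg.2 hle)]
  refine (Finset.card_le_card hsub).trans ?_
  rw [Int.card_Icc]
  omega

lemma card_parabola (S : Finset ℤ) (k E : ℤ) (L : ℕ)
    (h : ∀ x ∈ S, |(2 * x - k) ^ 2 - E| ≤ (L : ℤ) ^ 2) :
    S.card ≤ 2 * (L + 1) := by
  rw [← Finset.card_filter_add_card_filter_not (fun x => 0 ≤ 2 * x - k)]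
  have h1 := card_half (S.filter fun x => 0 ≤ 2 * x - k) k E L
    (fun x hx => (Finset.mem_filter.1 hx).2) (fun x hx => h x (Finset.mem_filter.1 hx).1)
  have h2 := card_half ((S.filter fun x => ¬ 0 ≤ 2 * x - k).image (fun x => -x)) (-k) E L
    (by
      intro y hy
      obtain ⟨x, hx, rfl⟩ := Finset.mem_image.1 hy
      have := (Finset.mem_filter.1 hx).2
      omega)
    (by
      intro y hy
      obtain ⟨x, hx, rfl⟩ := Finset.mem_image.1 hy
      have := h x (Finset.mem_filter.1 hx).1
      convert this using 3
      ring)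
  rw [Finset.card_image_of_injective _ neg_injective] at h2
  omega

lemma lev_lt (p : ℤ × ℤ) : |p.1 + p.2 ^ 2| < 2 ^ (lev p + 1) := by
  have := Nat.lt_pow_succ_log_self (b := 2) (by norm_num) ((p.1 + p.2 ^ 2).natAbs + 1)
  change _ < 2 ^ (lev p + 1) at this
  rw [Int.abs_eq_natAbs]
  exact_mod_cast (by omega : (p.1 + p.2 ^ 2).natAbs < 2 ^ (lev p + 1))

/-- The counting estimate. A decomposition `r = p + p'` is determined by the modulation `σ` of `p` and
by its second coordinate `k`. There are `O(2^m)` choices of `σ`; the identity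
`2(σ + σ') = (2k - r.2)² + 2 r.1 + r.2²` puts `(2k - r.2)²` into an interval of length `O(2^n)`, which
leaves `O(2^{n/2})` choices of `k`. -/
lemma card_fiber_nat (s : Finset (ℤ × ℤ)) (r : ℤ × ℤ) {m n : ℕ} (hmn : m ≤ n) :
    (s.filter fun p => lev p = m ∧ lev (r - p) = n).card
      ≤ 2 ^ (m + 2) * (4 * 2 ^ ((n + 4) / 2)) := by
  set F := s.filter fun p => lev p = m ∧ lev (r - p) = n with hF
  have hinj : Set.InjOn (fun p : ℤ × ℤ => (p.1 + p.2 ^ 2, p.2)) F := by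
    rintro ⟨q, k⟩ _ ⟨q', k'⟩ _ h
    simp only [Prod.mk.injEq] at h ⊢
    obtain ⟨h1, rfl⟩ := h
    exact ⟨by linarith, rfl⟩
  have hsub : F.image (fun p : ℤ × ℤ => (p.1 + p.2 ^ 2, p.2)) ⊆
      Finset.Ioo (-2 ^ (m + 1) : ℤ) (2 ^ (m + 1)) ×ˢ F.image Prod.snd := by
    intro z hz
    obtain ⟨p, hp, rfl⟩ := Finset.mem_image.1 hz
    have := (Finset.mem_filter.1 hp).2.1
    refine Finset.mem_product.2 ⟨Finset.mem_Ioo.2 (abs_lt.1 ?_), Finset.mem_image.2 ⟨p, hp, rfl⟩⟩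
    rw [← this]
    exact lev_lt p
  have hk : (F.image Prod.snd).card ≤ 2 * (2 ^ ((n + 4) / 2) + 1) := by
    apply card_parabola _ r.2 (-2 * r.1 - r.2 ^ 2)
    intro k hk
    obtain ⟨p, hp, rfl⟩ := Finset.mem_image.1 hk
    obtain ⟨_, h1, h2⟩ := Finset.mem_filter.1 hp
    have l1 := lev_lt p
    have l2 := lev_lt (r - p)
    rw [h1] at l1
    rw [h2] at l2
    have l3 : (2:ℤ) ^ (m + 1) ≤ 2 ^ (n + 1) := pow_le_pow_right₀ (by norm_num) (by omega)
    have l4 : (2:ℤ) ^ (n + 3) ≤ ((2 ^ ((n + 4) / 2) : ℕ) : ℤ) ^ 2 := by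
      push_cast
      rw [← pow_mul]
      exact pow_le_pow_right₀ (by norm_num) (by omega)
    have l5 : (2:ℤ) ^ (n + 3) = 4 * 2 ^ (n + 1) := by ring
    have l1' := abs_lt.1 l1
    have l2' := abs_lt.1 l2
    simp only [Prod.fst_sub, Prod.snd_sub] at l2'
    have e : (2 * p.2 - r.2) ^ 2 - (-2 * r.1 - r.2 ^ 2) =
      2 * (p.1 + p.2 ^ 2) + 2 * (r.1 - p.1 + (r.2 - p.2) ^ 2) := by ring
    rw [e]
    apply abs_le.2
    constructor <;> linarith
  rw [← Finset.card_image_of_injOn hinj]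
  refine (Finset.card_le_card hsub).trans ?_
  rw [Finset.card_product]
  refine Nat.mul_le_mul ?_ (hk.trans ?_)
  · rw [Int.card_Ioo]
    have : (2:ℤ) ^ (m + 1) - -2 ^ (m + 1) - 1 ≤ ((2 ^ (m + 2) : ℕ) : ℤ) := by
      push_cast
      have : (2:ℤ) ^ (m + 2) = 2 * 2 ^ (m + 1) := by ring
      linarith
    exact Int.toNat_le.2 this
  · have := Nat.one_le_two_pow (n := (n + 4) / 2)
    omega

/-- `β = 2^{1/8}`: all the powers of two with fractional exponents below are natural powers of `β`. -/
def β : ℝ := 2 ^ ((1:ℝ) / 8)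

lemma one_lt_β : 1 < β := Real.one_lt_rpow (by norm_num) (by norm_num)

lemma β_pow : β ^ 8 = 2 := by
  unfold β
  rw [← Real.rpow_natCast, ← Real.rpow_mul (by norm_num)]
  norm_num

/-- The counting estimate without an order on the levels: the reflection `p ↦ r - p` exchanges the
roles of `m` and `n`. The bound is `64 * 2^(min m n) * 2^(max m n / 2)`. -/
lemma card_fiber (s : Finset (ℤ × ℤ)) (r : ℤ × ℤ) (m n : ℕ) :
    ((s.filter fun p => lev p = m ∧ lev (r - p) = n).card : ℝ)
      ≤ (8 * β ^ (4 * min m n + 2 * max m n)) ^ 2 := by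
  have hβ := one_lt_β.le
  have main : ∀ (s : Finset (ℤ × ℤ)) (m n : ℕ), m ≤ n →
      ((s.filter fun p => lev p = m ∧ lev (r - p) = n).card : ℝ)
      ≤ (8 * β ^ (4 * m + 2 * n)) ^ 2 := by
    intro s m n h
    calc ((s.filter fun p => lev p = m ∧ lev (r - p) = n).card : ℝ)
        ≤ ((2 ^ (m + 2) * (4 * 2 ^ ((n + 4) / 2)) : ℕ) : ℝ) := by
          exact_mod_cast card_fiber_nat s r h
      _ = 16 * β ^ (8 * m) * β ^ (8 * ((n + 4) / 2)) := by
          push_cast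
          rw [pow_mul, pow_mul, β_pow]; ring
      _ ≤ 16 * β ^ (8 * m) * β ^ (4 * n + 16) := by
          gcongr
          omega
      _ = (8 * β ^ (4 * m + 2 * n)) ^ 2 := by
          have : β ^ 16 = 4 := by
            rw [show 16 = 8 * 2 by norm_num, pow_mul, β_pow]; norm_num
          rw [pow_add _ (4 * n), this]
          ring
  rcases le_total m n with h | h
  · rw [min_eq_left h, max_eq_right h]
    exact main s m n h
  · rw [min_eq_right h, max_eq_left h]
    refine le_trans ?_ (main (s.image (r - ·)) n m h)
    have : ((s.filter fun p => lev p = m ∧ lev (r - p) = n).image (r - ·)) ⊆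
        (s.image (r - ·)).filter fun p => lev p = n ∧ lev (r - p) = m := by
      intro z hz
      obtain ⟨p, hp, rfl⟩ := Finset.mem_image.1 hz
      obtain ⟨h0, h1, h2⟩ := Finset.mem_filter.1 hp
      exact Finset.mem_filter.2 ⟨Finset.mem_image_of_mem _ h0, h2, by rwa [sub_sub_cancel]⟩
    have h3 := Finset.card_le_card this
    rw [Finset.card_image_of_injective _ sub_right_injective] at h3
    exact_mod_cast h3

/-! ### The bilinear estimate and summation over dyadic levels -/

/-- The bilinear estimate for two functions living on single dyadic levels: Cauchy–Schwarz over the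
fibre of each output frequency, followed by summation over the output frequencies. -/
lemma bilinear (s : Finset (ℤ × ℤ)) (f g : ℤ × ℤ → ℂ) (m n : ℕ)
    (hf : ∀ p, lev p ≠ m → f p = 0) (hg : ∀ p, lev p ≠ n → g p = 0)
    (hgs : ∀ p, p ∉ s → g p = 0) :
    ∑ r ∈ Finset.image₂ (· + ·) s s, ‖conv s f g r‖ ^ 2
      ≤ (8 * β ^ (4 * min m n + 2 * max m n)) ^ 2 *
        ((∑ p ∈ s, ‖f p‖ ^ 2) * ∑ p ∈ s, ‖g p‖ ^ 2) := by
  set K := (8 * β ^ (4 * min m n + 2 * max m n)) ^ 2 with hK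
  have hpt : ∀ r, ‖conv s f g r‖ ^ 2 ≤ K * ∑ p ∈ s, ‖f p‖ ^ 2 * ‖g (r - p)‖ ^ 2 := by
    intro r
    have e : conv s f g r = ∑ p ∈ s.filter (fun p => lev p = m ∧ lev (r - p) = n),
        f p * g (r - p) := by
      rw [conv, Finset.sum_filter_of_ne]
      intro p _ hne
      refine ⟨?_, ?_⟩ <;> by_contra h
      · exact hne (by rw [hf p h, zero_mul])
      · exact hne (by rw [hg _ h, mul_zero])
    rw [e]
    set F := s.filter (fun p => lev p = m ∧ lev (r - p) = n) with hF
    calc ‖∑ p ∈ F, f p * g (r - p)‖ ^ 2 ≤ (∑ p ∈ F, ‖f p * g (r - p)‖) ^ 2 := by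
          gcongr; exact norm_sum_le _ _
      _ ≤ F.card * ∑ p ∈ F, ‖f p * g (r - p)‖ ^ 2 := sq_sum_le_card_mul_sum_sq
      _ ≤ K * ∑ p ∈ s, ‖f p * g (r - p)‖ ^ 2 := by
          gcongr
          · exact card_fiber s r m n
          · exact Finset.filter_subset _ _
      _ = _ := by simp_rw [norm_mul, mul_pow]
  calc ∑ r ∈ Finset.image₂ (· + ·) s s, ‖conv s f g r‖ ^ 2
      ≤ ∑ r ∈ Finset.image₂ (· + ·) s s, K * ∑ p ∈ s, ‖f p‖ ^ 2 * ‖g (r - p)‖ ^ 2 :=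
        Finset.sum_le_sum fun r _ => hpt r
    _ = K * ∑ p ∈ s, ∑ r ∈ Finset.image₂ (· + ·) s s, ‖f p‖ ^ 2 * ‖g (r - p)‖ ^ 2 := by
        rw [← Finset.mul_sum, Finset.sum_comm]
    _ = _ := by
        rw [Finset.sum_mul]
        congr 1
        refine Finset.sum_congr rfl fun p hp => ?_
        rw [sum_shift s (fun p => ‖g p‖) (fun p h => by simp [hgs p h]) hp
          (fun r => ‖f p‖ ^ 2 * ‖g (r - p)‖ ^ 2) (fun r hr => by simp only [hr]; simp),
          Finset.mul_sum]
        simp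

/-- Minkowski's inequality in `ℓ²(T)`. -/
lemma l2_sum {ι : Type*} (I : Finset ι) (T : Finset (ℤ × ℤ)) (h : ι → ℤ × ℤ → ℂ) :
    √(∑ r ∈ T, ‖∑ i ∈ I, h i r‖ ^ 2) ≤ ∑ i ∈ I, √(∑ r ∈ T, ‖h i r‖ ^ 2) := by
  have := norm_sum_le I fun i => (WithLp.toLp 2 fun r : T => h i r : EuclideanSpace ℂ T)
  simp only [EuclideanSpace.norm_eq, WithLp.ofLp_sum, Finset.sum_apply] at this
  have e : ∀ G : ℤ × ℤ → ℝ, ∑ r ∈ T, G r = ∑ r : T, G r := fun G =>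
    (Finset.sum_coe_sort T G).symm
  simp_rw [e]
  exact this

/-- Each side `n ≤ m`, `n > m` of the row is part of a geometric series. -/
lemma schur_row (m N : ℕ) :
    ∑ n ∈ Finset.range N, β⁻¹ ^ (max m n - min m n) ≤ 2 * (1 - β⁻¹)⁻¹ := by
  have h0 : 0 ≤ β⁻¹ := inv_nonneg.2 (zero_le_one.trans one_lt_β.le)
  have h1 : β⁻¹ < 1 := inv_lt_one_of_one_lt₀ one_lt_β
  have geo : ∀ (S : Finset ℕ) (j : ℕ → ℕ), Set.InjOn j S →
      ∑ n ∈ S, β⁻¹ ^ (j n) ≤ (1 - β⁻¹)⁻¹ := by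
    intro S j hj
    rw [← Finset.sum_image (f := fun i => β⁻¹ ^ i) hj, ← tsum_geometric_of_lt_one h0 h1]
    exact (summable_geometric_of_lt_one h0 h1).sum_le_tsum _ fun i _ => by positivity
  rw [← Finset.sum_filter_add_sum_filter_not _ (fun n => n ≤ m), two_mul]
  refine add_le_add (geo _ _ ?_) (geo _ _ ?_)
  · intro x hx y hy h
    simp at hx hy h
    omega
  · intro x hx y hy h
    simp at hx hy h
    omega

/-- Schur's test for the kernel `β^{-|m-n|}`. The truncated subtraction `max m n - min m n` is
`|m - n|`. -/
lemma schur (N : ℕ) (c : ℕ → ℝ) :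
    ∑ m ∈ Finset.range N, ∑ n ∈ Finset.range N, β⁻¹ ^ (max m n - min m n) * (c m * c n)
      ≤ 2 * (1 - β⁻¹)⁻¹ * ∑ m ∈ Finset.range N, c m ^ 2 := by
  have h0 : 0 ≤ β⁻¹ := inv_nonneg.2 (zero_le_one.trans one_lt_β.le)
  have hsym : ∑ m ∈ Finset.range N, ∑ n ∈ Finset.range N, β⁻¹ ^ (max m n - min m n) * c n ^ 2
      = ∑ m ∈ Finset.range N, ∑ n ∈ Finset.range N, β⁻¹ ^ (max m n - min m n) * c m ^ 2 := by
    rw [Finset.sum_comm]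
    simp_rw [max_comm, min_comm]
  calc ∑ m ∈ Finset.range N, ∑ n ∈ Finset.range N, β⁻¹ ^ (max m n - min m n) * (c m * c n)
      ≤ ∑ m ∈ Finset.range N, ∑ n ∈ Finset.range N,
        (β⁻¹ ^ (max m n - min m n) * c m ^ 2 / 2 + β⁻¹ ^ (max m n - min m n) * c n ^ 2 / 2) := by
        refine Finset.sum_le_sum fun m _ => Finset.sum_le_sum fun n _ => ?_
        have : 0 ≤ β⁻¹ ^ (max m n - min m n) := by positivity
        nlinarith [mul_nonneg this (sq_nonneg (c m - c n))]
    _ = ∑ m ∈ Finset.range N, ∑ n ∈ Finset.range N, β⁻¹ ^ (max m n - min m n) * c m ^ 2 := by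
        simp_rw [Finset.sum_add_distrib, ← Finset.sum_div]
        rw [hsym]; ring
    _ = ∑ m ∈ Finset.range N, (∑ n ∈ Finset.range N, β⁻¹ ^ (max m n - min m n)) * c m ^ 2 := by
        simp_rw [Finset.sum_mul]
    _ ≤ _ := by
        rw [Finset.mul_sum]
        gcongr with m _
        exact schur_row m N

/-- The part of `a` carried by the frequencies of dyadic level `m`. -/
def shell (a : ℤ × ℤ → ℂ) (m : ℕ) (p : ℤ × ℤ) : ℂ := if lev p = m then a p else 0

/-- The sharp convolution estimate: the weight `β^(6 * lev p)` is comparable to `⟨q+k²⟩^{3/4}`. -/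
lemma l2_conv (s : Finset (ℤ × ℤ)) (a : ℤ × ℤ → ℂ) (ha : ∀ p, p ∉ s → a p = 0) :
    √(∑ r ∈ Finset.image₂ (· + ·) s s, ‖conv s a a r‖ ^ 2)
      ≤ 16 * (1 - β⁻¹)⁻¹ * ∑ p ∈ s, β ^ (6 * lev p) * ‖a p‖ ^ 2 := by
  have hβ0 : 0 < β := zero_lt_one.trans one_lt_β
  obtain ⟨N, hN⟩ : ∃ N, ∀ p ∈ s, lev p < N :=
    ⟨s.sup lev + 1, fun p hp => Nat.lt_succ_of_le (Finset.le_sup hp)⟩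
  have hdec : ∀ p, a p = ∑ m ∈ Finset.range N, shell a m p := by
    intro p
    simp only [shell, Finset.sum_ite_eq, Finset.mem_range]
    split_ifs with h
    · rfl
    · exact ha p fun hp => h (hN p hp)
  set I := Finset.range N ×ˢ Finset.range N with hI
  have hconv : ∀ r, conv s a a r = ∑ i ∈ I, conv s (shell a i.1) (shell a i.2) r := by
    intro r
    simp only [conv]
    rw [Finset.sum_comm]
    refine Finset.sum_congr rfl fun p _ => ?_
    rw [hdec p, hdec (r - p), Finset.sum_mul_sum, hI, Finset.sum_product]
  set A : ℕ → ℝ := fun m => ∑ p ∈ s, ‖shell a m p‖ ^ 2 with hA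
  have hA0 : ∀ m, 0 ≤ A m := fun m => Finset.sum_nonneg fun p _ => by positivity
  have hs0 : ∀ m p, p ∉ s → shell a m p = 0 := fun m p hp => by simp [shell, ha p hp]
  have hsl : ∀ m p, lev p ≠ m → shell a m p = 0 := fun m p hp => by simp [shell, hp]
  simp_rw [hconv]
  calc _ ≤ ∑ i ∈ I, √(∑ r ∈ Finset.image₂ (· + ·) s s,
          ‖conv s (shell a i.1) (shell a i.2) r‖ ^ 2) := l2_sum _ _ _
    _ ≤ ∑ i ∈ I, 8 * (β⁻¹ ^ (max i.1 i.2 - min i.1 i.2) *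
          ((β ^ (3 * i.1) * √(A i.1)) * (β ^ (3 * i.2) * √(A i.2)))) := by
        refine Finset.sum_le_sum fun i _ => ?_
        obtain ⟨m, n⟩ := i
        refine (Real.sqrt_le_sqrt (bilinear s _ _ m n (hsl m) (hsl n) (hs0 n))).trans_eq ?_
        rw [Real.sqrt_mul (by positivity), Real.sqrt_sq (by positivity), Real.sqrt_mul (hA0 m)]
        -- This is where `3/8` appears: `min/2 + max/4 = 3(m+n)/8 - |m-n|/8` as exponents of `2`.
        have : β ^ (4 * min m n + 2 * max m n) =
            β⁻¹ ^ (max m n - min m n) * (β ^ (3 * m) * β ^ (3 * n)) := by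
          rw [inv_pow, eq_inv_mul_iff_mul_eq₀ (by positivity), ← pow_add, ← pow_add]
          congr 1
          omega
        dsimp only
        rw [this]; ring
    _ = 8 * ∑ m ∈ Finset.range N, ∑ n ∈ Finset.range N, β⁻¹ ^ (max m n - min m n) *
          ((β ^ (3 * m) * √(A m)) * (β ^ (3 * n) * √(A n))) := by
        rw [← Finset.mul_sum, hI, Finset.sum_product]
    _ ≤ 8 * (2 * (1 - β⁻¹)⁻¹ * ∑ m ∈ Finset.range N, (β ^ (3 * m) * √(A m)) ^ 2) := by
        gcongr
        exact schur N fun m => β ^ (3 * m) * √(A m)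
    _ = 16 * (1 - β⁻¹)⁻¹ * ∑ m ∈ Finset.range N, β ^ (6 * m) * A m := by
        rw [← mul_assoc, ← mul_assoc]
        congr 1
        · norm_num
        refine Finset.sum_congr rfl fun m _ => ?_
        rw [mul_pow, Real.sq_sqrt (hA0 m), ← pow_mul]
        ring_nf
    _ = _ := by
        congr 1
        simp only [hA, Finset.mul_sum]
        rw [Finset.sum_comm]
        refine Finset.sum_congr rfl fun p hp => ?_
        rw [Finset.sum_eq_single (lev p)]
        · simp [shell]
        · intro m _ hm
          rw [hsl m p hm.symm]; simp
        · intro h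
          exact absurd (Finset.mem_range.2 (hN p hp)) h

lemma weight (p : ℤ × ℤ) :
    β ^ (6 * lev p) ≤ 2 * ((1:ℝ) + ((p.1 + p.2 ^ 2 : ℤ) : ℝ) ^ 2) ^ ((3:ℝ)/8) := by
  set σ := p.1 + p.2 ^ 2 with hσ
  have h1 : (2:ℝ) ^ lev p ≤ |(σ : ℝ)| + 1 := by
    have := Nat.pow_log_le_self 2 (x := σ.natAbs + 1) (by omega)
    change 2 ^ lev p ≤ _ at this
    have h2 : ((2 ^ lev p : ℕ) : ℝ) ≤ ((σ.natAbs + 1 : ℕ) : ℝ) := by exact_mod_cast this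
    push_cast at h2
    rwa [Nat.cast_natAbs, Int.cast_abs] at h2
  have h3 : ((2:ℝ) ^ lev p) ^ 2 ≤ 2 * (1 + (σ:ℝ) ^ 2) := by
    calc ((2:ℝ) ^ lev p) ^ 2 ≤ (|(σ : ℝ)| + 1) ^ 2 := by gcongr
      _ ≤ _ := by nlinarith [sq_nonneg (|(σ : ℝ)| - 1), sq_abs (σ : ℝ)]
  have h4 : β ^ (6 * lev p) = (((2:ℝ) ^ lev p) ^ 2) ^ ((3:ℝ)/8) := by
    rw [← pow_mul, β, ← Real.rpow_natCast, ← Real.rpow_natCast, ← Real.rpow_mul (by norm_num),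
      ← Real.rpow_mul (by norm_num)]
    congr 1
    push_cast; ring
  rw [h4]
  calc (((2:ℝ) ^ lev p) ^ 2) ^ ((3:ℝ)/8) ≤ (2 * (1 + (σ:ℝ) ^ 2)) ^ ((3:ℝ)/8) := by gcongr
    _ = (2:ℝ) ^ ((3:ℝ)/8) * (1 + (σ:ℝ) ^ 2) ^ ((3:ℝ)/8) :=
        Real.mul_rpow (by norm_num) (by positivity)
    _ ≤ _ := by
        gcongr
        calc (2:ℝ) ^ ((3:ℝ)/8) ≤ 2 ^ (1:ℝ) :=
              Real.rpow_le_rpow_of_exponent_le (by norm_num) (by norm_num)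
          _ = 2 := by norm_num

end BourgainL4

open BourgainL4 in
/-- **Bourgain's `L⁴` estimate on `𝕋²`:** `‖u‖_{L⁴(𝕋²)} ≲ ‖u‖_{X^{3/8,0}}`, i.e.
`(∫∫ |u|⁴)^{1/4} ≤ C (Σ (1+(q+k²)²)^{3/8} |a(q,k)|²)^{1/2}` for all trigonometric
polynomials `u` on `𝕋²`. -/
theorem bourgain_L4_estimate :
    ∃ C > (0:ℝ), ∀ a : ℤ × ℤ → ℂ, (Function.support a).Finite →
      (∫ t in (0:ℝ)..(2 * π), ∫ x in (0:ℝ)..(2 * π), ‖trigPoly2 a t x‖ ^ 4) ^ ((1:ℝ)/4)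
        ≤ C * (∑' p : ℤ × ℤ,
            ((1:ℝ) + ((p.1 + p.2 ^ 2 : ℤ) : ℝ) ^ 2) ^ ((3:ℝ)/8) * ‖a p‖ ^ 2) ^ ((1:ℝ)/2) := by
  have hρ : 0 < (1 - β⁻¹)⁻¹ := inv_pos.2 (sub_pos.2 (inv_lt_one_of_one_lt₀ one_lt_β))
  set D : ℝ := 2 * π * (32 * (1 - β⁻¹)⁻¹) with hD
  have hD0 : 0 < D := by positivity
  refine ⟨D ^ ((1:ℝ)/2), by positivity, fun a hfin => ?_⟩
  set s := hfin.toFinset with hs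
  have ha : ∀ p, p ∉ s → a p = 0 := by
    intro p hp
    by_contra h
    exact hp (hfin.mem_toFinset.2 h)
  have hu : ∀ t x, trigPoly2 a t x = ∑ p ∈ s, a p * chr p t x := by
    intro t x
    exact tsum_eq_sum fun p hp => by rw [ha p hp, zero_mul]
  rw [tsum_eq_sum (s := s) fun p hp => by rw [ha p hp]; simp]
  set Q := ∑ p ∈ s, ((1:ℝ) + ((p.1 + p.2 ^ 2 : ℤ) : ℝ) ^ 2) ^ ((3:ℝ)/8) * ‖a p‖ ^ 2 with hQ
  have hQ0 : 0 ≤ Q := Finset.sum_nonneg fun p _ => by positivity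
  set B := ∑ r ∈ Finset.image₂ (· + ·) s s, ‖conv s a a r‖ ^ 2 with hB
  have hint : (∫ t in (0:ℝ)..(2 * π), ∫ x in (0:ℝ)..(2 * π), ‖trigPoly2 a t x‖ ^ 4)
      = (2 * π) ^ 2 * B := by
    rw [hB, ← plancherel]
    simp_rw [← sq_eq_conv s a ha, hu, norm_pow, ← pow_mul]
  have hB0 : 0 ≤ B := Finset.sum_nonneg fun p _ => by positivity
  have hBQ : √B ≤ 32 * (1 - β⁻¹)⁻¹ * Q := by
    refine (l2_conv s a ha).trans ?_
    calc 16 * (1 - β⁻¹)⁻¹ * ∑ p ∈ s, β ^ (6 * lev p) * ‖a p‖ ^ 2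
        ≤ 16 * (1 - β⁻¹)⁻¹ * (2 * Q) := by
          refine mul_le_mul_of_nonneg_left ?_ (by positivity)
          rw [hQ, Finset.mul_sum]
          refine Finset.sum_le_sum fun p _ => ?_
          rw [← mul_assoc]
          exact mul_le_mul_of_nonneg_right (weight p) (by positivity)
      _ = _ := by ring
  have hsq : (2 * π) ^ 2 * B ≤ (D * Q) ^ 2 := by
    calc (2 * π) ^ 2 * B = (2 * π * √B) ^ 2 := by rw [mul_pow (2 * π), Real.sq_sqrt hB0]
      _ ≤ (2 * π * (32 * (1 - β⁻¹)⁻¹ * Q)) ^ 2 := by gcongr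
      _ = _ := by rw [hD]; ring
  rw [hint]
  calc ((2 * π) ^ 2 * B) ^ ((1:ℝ)/4) ≤ ((D * Q) ^ 2) ^ ((1:ℝ)/4) := by gcongr
    _ = (D * Q) ^ ((1:ℝ)/2) := by
        rw [← Real.rpow_natCast, ← Real.rpow_mul (by positivity)]
        norm_num
    _ = _ := Real.mul_rpow hD0.le hQ0
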